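/- arXiv:1902.05604 — 2 statements merged into one kernel-verified Lean document; each statement's English description precedes it below -/
import Mathlib

section
/- Let N = (P,T,F,Var) be a UDPN and i, f ℚ⁺-markings. If there exists a ℚ⁺-run σ such that i →σ_{ℚ⁺} f and |dval(σ)| > |dval(i) ∪ dval(f)| + 1 + maxvars(N), then there exists a ℚ⁺-run ρ such that i →ρ_{ℚ⁺} f and |dval(ρ)| ≤ |dval(σ)| − 1. -/
open Finset

noncomputable section
open scoped Classical

/-- An unordered data Petri net over places `P`, transitions `T`, variables `V`,
with countably infinite data domain `D = ℕ`.
`pre p t` is the function `F(p,t) : V → ℕ` and `post t p` is `F(t,p) : V → ℕ`. -/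
structure UDPN (P T V : Type) where
  pre : P → T → V → ℕ
  post : T → P → V → ℕ

/-- An X-step `(c, t, π)`: coefficient, transition and mode. -/
structure Step (T V : Type) where
  c : ℚ
  t : T
  π : V → ℕ

variable {P T V : Type} [Fintype P] [Fintype T] [Fintype V]

/-- The `P × V` rational matrix `F(•,t)`. -/
def preMat (N : UDPN P T V) (t : T) (p : P) (x : V) : ℚ := (N.pre p t x : ℚ)

/-- The displacement `Δ(t) = F(t,•) − F(•,t)` as a `P × V` rational matrix. -/
def delta (N : UDPN P T V) (t : T) (p : P) (x : V) : ℚ :=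
  (N.post t p x : ℚ) - (N.pre p t x : ℚ)

/-- `A ∘ π⁻¹`: the `P × ℕ` matrix with `(A∘π⁻¹)(p,α) = A(p,x)` if `α = π x`,
and `0` if `α` is outside the range of `π`. (For injective `π` the sum has at
most one nonzero summand.) -/
def compInv (A : P → V → ℚ) (π : V → ℕ) (p : P) (α : ℕ) : ℚ :=
  ∑ x : V, if π x = α then A p x else 0

/-- Only finitely many nonzero columns. -/
def FinCols (m : P → ℕ → ℚ) : Prop := {α : ℕ | ∃ p, m p α ≠ 0}.Finite

/-- `IsMarking pos m`: `m` is an X-marking; `pos = true` corresponds to `X = ℚ⁺`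
(all entries nonnegative), `pos = false` to `X = ℚ`. -/
def IsMarking (pos : Bool) (m : P → ℕ → ℚ) : Prop :=
  FinCols m ∧ (pos = true → ∀ p α, 0 ≤ m p α)

/-- Data values of a marking. -/
def dvalM (m : P → ℕ → ℚ) : Set ℕ := {α | ∃ p, m p α ≠ 0}

/-- A valid X-step: nonnegative coefficient and injective mode.  -/
def IsStep (s : Step T V) : Prop := 0 ≤ s.c ∧ Function.Injective s.π

/-- A valid X-run: a finite sequence of X-steps. -/
def IsRun (ρ : List (Step T V)) : Prop := ∀ s ∈ ρ, IsStep s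

/-- The effect `c · (Δ(t) ∘ π⁻¹)` of a step. -/
def stepEffect (N : UDPN P T V) (s : Step T V) (p : P) (α : ℕ) : ℚ :=
  s.c * compInv (delta N s.t) s.π p α

/-- The effect `Δ(ρ)` of a run. -/
def runEffect (N : UDPN P T V) (ρ : List (Step T V)) (p : P) (α : ℕ) : ℚ :=
  (ρ.map fun s => stepEffect N s p α).sum

/-- A step `(c,t,π)` is fireable at `m` if `m − c·(F(•,t)∘π⁻¹)` is again an
X-marking: finitely many nonzero columns and (when `pos`) nonnegative entries. -/
def stepFireable (pos : Bool) (N : UDPN P T V) (m : P → ℕ → ℚ) (s : Step T V) : Prop :=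
  FinCols (fun p α => m p α - s.c * compInv (preMat N s.t) s.π p α) ∧
  (pos = true → ∀ p α, 0 ≤ m p α - s.c * compInv (preMat N s.t) s.π p α)

/-- A run is fireable at `m` if each step is fireable at the corresponding
intermediate marking. -/
def runFireable (pos : Bool) (N : UDPN P T V) : (P → ℕ → ℚ) → List (Step T V) → Prop
  | _, [] => True
  | m, s :: ρ => stepFireable pos N m s ∧
      runFireable pos N (fun p α => m p α + stepEffect N s p α) ρ

/-- `m →ρ_X m'` : `ρ` is fireable at `m` and `m' = m + Δ(ρ)`. -/
def Reaches (pos : Bool) (N : UDPN P T V) (i : P → ℕ → ℚ) (ρ : List (Step T V))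
    (f : P → ℕ → ℚ) : Prop :=
  runFireable pos N i ρ ∧ f = fun p α => i p α + runEffect N ρ p α

/-- `f` is X-reachable from `i`. -/
def Reach (pos : Bool) (N : UDPN P T V) (i f : P → ℕ → ℚ) : Prop :=
  ∃ ρ, IsRun ρ ∧ Reaches pos N i ρ f

/-- `vars(t)`. -/
def varsOf (N : UDPN P T V) (t : T) : Set V :=
  {x | ∃ p, N.pre p t x ≠ 0 ∨ N.post t p x ≠ 0}

/-- `maxvars(N) = max_{t ∈ T} |vars(t)|` (0 if `T` is empty). -/
def maxvars (N : UDPN P T V) : ℕ :=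
  Finset.univ.sup fun t : T => (varsOf N t).ncard

/-- `dval(ρ)`: the data values used by a run. -/
def runDval (N : UDPN P T V) (ρ : List (Step T V)) : Set ℕ :=
  {α | ∃ s ∈ ρ, ∃ x ∈ varsOf N s.t, s.π x = α}
/-- For `α ∈ E`: the least element of `{β ∈ E | β > α}` if nonempty, else `min E`. -/
def nextE (E : Finset ℕ) (α : ℕ) : ℕ :=
  if h : (E.filter fun β => α < β).Nonempty then (E.filter fun β => α < β).min' h
  else if h' : E.Nonempty then E.min' h' else 0

/-- The inverse of `nextE` on `E`: the greatest element of `{γ ∈ E | γ < β}` if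
nonempty, else `max E`. -/
def prevE (E : Finset ℕ) (β : ℕ) : ℕ :=
  if h : (E.filter fun γ => γ < β).Nonempty then (E.filter fun γ => γ < β).max' h
  else if h' : E.Nonempty then E.max' h' else 0

/-- The mode `π'` of `rot(E,ω)`, characterized by: the permutation matrix `P'` of
`π'` satisfies `P'(•,α) = P(•,α)` for `α ∉ E` and `P'(•,α) = P(•, nextE α)` for
`α ∈ E` (i.e. `π' x = α ↔ π x = nextE α` for `α ∈ E`). -/
def rotMode {V : Type} (E : Finset ℕ) (π : V → ℕ) (x : V) : ℕ :=
  if π x ∈ E then prevE E (π x) else π x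

/-- `rot(E,ω)`. -/
def rotStep (E : Finset ℕ) (s : Step T V) : Step T V := ⟨s.c, s.t, rotMode E s.π⟩

/-- The uniformization `U(E,ω)`: the concatenation
`rot^0(E, ω/|E|) ⋯ rot^{|E|−1}(E, ω/|E|)`. -/
def uniformize (E : Finset ℕ) (s : Step T V) : List (Step T V) :=
  (List.range E.card).map fun k => (rotStep E)^[k] ⟨s.c / (E.card : ℚ), s.t, s.π⟩

/-- Column `α` of `Δ(t)·P_π` is zero. -/
def zeroCol (N : UDPN P T V) (s : Step T V) (α : ℕ) : Prop :=
  ∀ p, compInv (delta N s.t) s.π p α = 0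

/-- The transposition of the data values `α` and `β`. -/
def swapVal (α β γ : ℕ) : ℕ := if γ = α then β else if γ = β then α else γ

/-- `R(α,E,ω)`: if column `α` of `Δ(t)·P_π` is zero then `ω` itself; otherwise the
step whose permutation matrix is obtained from `P_π` by exchanging columns `α` and
`β`, where `β` is the least datum in `E` whose column of `Δ(t)·P_π` is zero. -/
def replaceStep (N : UDPN P T V) (α : ℕ) (E : Finset ℕ) (s : Step T V) : Step T V :=
  if zeroCol N s α then s
  else if h : (E.filter fun β => zeroCol N s β).Nonempty then
    ⟨s.c, s.t, fun x => swapVal α ((E.filter fun β => zeroCol N s β).min' h) (s.π x)⟩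
  else s

/-- `dec(E,α,σ)`: the concatenation `U(E,R(α,E,σ(1))) ⋯ U(E,R(α,E,σ(n)))`. -/
def decRun (N : UDPN P T V) (α : ℕ) (E : Finset ℕ) (σ : List (Step T V)) :
    List (Step T V) :=
  σ.flatMap fun s => uniformize E (replaceStep N α E s)

/-- A histogram of order `q`: a `V × ℕ` matrix with nonnegative rational entries
and finitely many nonzero columns, every row summing to `q` and every column
summing to at most `q`. -/
def IsHistogram (H : V → ℕ → ℚ) (q : ℚ) : Prop :=
  0 ≤ q ∧ (∀ x α, 0 ≤ H x α) ∧ ({α | ∃ x, H x α ≠ 0}).Finite ∧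
  (∀ x, ∑ᶠ α, H x α = q) ∧ (∀ α, ∑ x : V, H x α ≤ q)

/-- `col(H)`: the nonzero columns of `H`. -/
def colH (H : V → ℕ → ℚ) : Set ℕ := {α | ∃ x, H x α ≠ 0}

/-- The permutation matrix `P_π` of a mode `π`. -/
def permMat {V : Type} (π : V → ℕ) (x : V) (α : ℕ) : ℚ := if π x = α then 1 else 0

/-- `Pre(ρ)`: pairs `(p,α)` of tokens consumed by the run `ρ`. -/
def preSet (N : UDPN P T V) (ρ : List (Step T V)) : Set (P × ℕ) :=
  {pa | ∃ s ∈ ρ, ∃ x, 0 < N.pre pa.1 s.t x ∧ s.π x = pa.2}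

/-- `Post(ρ)`: pairs `(p,α)` of tokens produced by the run `ρ`. -/
def postSet (N : UDPN P T V) (ρ : List (Step T V)) : Set (P × ℕ) :=
  {pa | ∃ s ∈ ρ, ∃ x, 0 < N.post s.t pa.1 x ∧ s.π x = pa.2}

/-- A loop-less UDPN: `PrePlace(t) ∩ PostPlace(t) = ∅` for every transition. -/
def IsLoopless (N : UDPN P T V) : Prop :=
  ∀ t : T, ¬ ∃ p : P, (∃ x, 0 < N.pre p t x) ∧ (∃ x, 0 < N.post t p x)

set_option linter.unusedSectionVars false

/-- The marking obtained from `m` by emptying column `α` and giving each column in `E` the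
average, over `E`, of the total content of the columns in `insert α E`. -/
def collapseCols (E : Finset ℕ) (α : ℕ) (m : P → ℕ → ℚ) (p : P) (γ : ℕ) : ℚ :=
  if γ = α then 0
  else if γ ∈ E then (∑ e ∈ insert α E, m p e) / (E.card : ℚ)
  else m p γ

/-- The steps obtained from `s` by moving the datum `α` to `β` and then rotating along the
powers of `g`, each with the fraction `1 / |E|` of the coefficient of `s`. -/
def spreadStep (E : Finset ℕ) (g : Equiv.Perm ℕ) (α β : ℕ) (s : Step T V) : List (Step T V) :=
  (List.range E.card).map fun k =>
    ⟨s.c / (E.card : ℚ), s.t, fun x => (g ^ k) (Equiv.swap α β (s.π x))⟩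

lemma collapseCols_add (E : Finset ℕ) (α : ℕ) (m m' : P → ℕ → ℚ) :
    collapseCols E α (fun p γ => m p γ + m' p γ) =
      fun p γ => collapseCols E α m p γ + collapseCols E α m' p γ := by
  funext p γ
  unfold collapseCols
  split_ifs
  · simp
  · rw [Finset.sum_add_distrib, add_div]
  · rfl

lemma collapseCols_nonneg (E : Finset ℕ) (α : ℕ) {m : P → ℕ → ℚ} (hm : ∀ p γ, 0 ≤ m p γ)
    (p : P) (γ : ℕ) : 0 ≤ collapseCols E α m p γ := by
  unfold collapseCols
  split_ifs
  · exact le_rfl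
  · exact div_nonneg (Finset.sum_nonneg fun e _ => hm p e) (Nat.cast_nonneg _)
  · exact hm p γ

lemma collapseCols_eq_self {E : Finset ℕ} {α : ℕ} {m : P → ℕ → ℚ}
    (h : ∀ e ∈ insert α E, ∀ p, m p e = 0) : collapseCols E α m = m := by
  funext p γ
  unfold collapseCols
  split_ifs with hα hE
  · subst hα
    exact (h _ (Finset.mem_insert_self _ _) p).symm
  · rw [Finset.sum_eq_zero fun e he => h e he p, zero_div, h γ (Finset.mem_insert_of_mem hE) p]
  · rfl

lemma FinCols.collapseCols {m : P → ℕ → ℚ} (hm : FinCols m) (E : Finset ℕ) (α : ℕ) :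
    FinCols (collapseCols E α m) := by
  refine (E.finite_toSet.union hm).subset ?_
  rintro γ ⟨p, hp⟩
  by_cases hE : γ ∈ E
  · exact Or.inl hE
  · refine Or.inr ⟨p, fun h0 => hp ?_⟩
    simp [_root_.collapseCols, hE, h0]

lemma FinCols.add {m m' : P → ℕ → ℚ} (hm : FinCols m) (hm' : FinCols m') :
    FinCols (fun p γ => m p γ + m' p γ) := by
  refine (Set.Finite.union hm hm').subset ?_
  rintro γ ⟨p, hp⟩
  by_cases h0 : m p γ = 0
  · exact Or.inr ⟨p, fun h1 => hp (by simp [h0, h1])⟩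
  · exact Or.inl ⟨p, h0⟩

lemma finCols_mul_compInv (c : ℚ) (A : P → V → ℚ) (π : V → ℕ) :
    FinCols (fun p γ => c * compInv A π p γ) := by
  refine (Set.finite_range π).subset ?_
  rintro γ ⟨p, hp⟩
  by_contra hγ
  refine hp ?_
  have hzero : compInv A π p γ = 0 :=
    Finset.sum_eq_zero fun x _ => if_neg fun hx => hγ ⟨x, hx⟩
  simp [hzero]

lemma finCols_stepEffect (N : UDPN P T V) (s : Step T V) : FinCols (stepEffect N s) :=
  finCols_mul_compInv s.c (delta N s.t) s.π

lemma FinCols.sub_mul_compInv {m : P → ℕ → ℚ} (hm : FinCols m) (c : ℚ) (A : P → V → ℚ)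
    (π : V → ℕ) : FinCols (fun p γ => m p γ - c * compInv A π p γ) := by
  have h := hm.add (finCols_mul_compInv (-c) A π)
  simpa only [neg_mul, ← sub_eq_add_neg] using h

lemma compInv_nonneg {A : P → V → ℚ} (hA : ∀ p x, 0 ≤ A p x) (π : V → ℕ) (p : P) (γ : ℕ) :
    0 ≤ compInv A π p γ := by
  refine Finset.sum_nonneg fun x _ => ?_
  split_ifs
  exacts [hA p x, le_rfl]

lemma preMat_nonneg (N : UDPN P T V) (t : T) (p : P) (x : V) : 0 ≤ preMat N t p x :=
  Nat.cast_nonneg _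

lemma neg_mul_compInv_preMat_le_stepEffect (N : UDPN P T V) (s : Step T V) (hs : 0 ≤ s.c) (p : P) (γ : ℕ) :
    -(s.c * compInv (preMat N s.t) s.π p γ) ≤ stepEffect N s p γ := by
  unfold stepEffect
  rw [← mul_neg]
  refine mul_le_mul_of_nonneg_left ?_ hs
  unfold compInv
  rw [← Finset.sum_neg_distrib]
  refine Finset.sum_le_sum fun x _ => ?_
  split_ifs
  · simp [preMat, delta]
  · simp

/-- A run is fireable as soon as the marking covers its total consumption. -/
lemma runFireable_of_total_pre_le (N : UDPN P T V) :
    ∀ (L : List (Step T V)) (m : P → ℕ → ℚ), FinCols m → IsRun L →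
      (∀ p γ, (L.map fun s => s.c * compInv (preMat N s.t) s.π p γ).sum ≤ m p γ) →
      runFireable true N m L
  | [], _, _, _, _ => trivial
  | s :: L, m, hm, hL, hle => by
    have hs : IsStep s := hL s (by simp)
    have hL' : IsRun L := fun s' hs' => hL s' (List.mem_cons_of_mem _ hs')
    refine ⟨⟨hm.sub_mul_compInv _ _ _, fun _ p γ => ?_⟩,
      runFireable_of_total_pre_le N L _ (hm.add (finCols_stepEffect N s)) hL' fun p γ => ?_⟩
    · have h := hle p γ
      rw [List.map_cons, List.sum_cons] at h
      have hrest : 0 ≤ (L.map fun s => s.c * compInv (preMat N s.t) s.π p γ).sum := by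
        refine List.sum_nonneg fun q hq => ?_
        obtain ⟨s', hs', rfl⟩ := List.mem_map.1 hq
        exact mul_nonneg (hL' s' hs').1 (compInv_nonneg (preMat_nonneg N _) _ _ _)
      linarith
    · have h := hle p γ
      rw [List.map_cons, List.sum_cons] at h
      have h' := neg_mul_compInv_preMat_le_stepEffect N s hs.1 p γ
      linarith

lemma runFireable_append (N : UDPN P T V) :
    ∀ (L L' : List (Step T V)) (m : P → ℕ → ℚ), runFireable true N m L →
      runFireable true N (fun p γ => m p γ + runEffect N L p γ) L' →
      runFireable true N m (L ++ L')
  | [], _, m, _, h' => by simpa [runEffect] using h'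
  | s :: L, L', m, h, h' => by
    refine ⟨h.1, runFireable_append N L L' _ h.2 ?_⟩
    simpa [runEffect, add_assoc] using h'

lemma runEffect_append (N : UDPN P T V) (L L' : List (Step T V)) (p : P) (γ : ℕ) :
    runEffect N (L ++ L') p γ = runEffect N L p γ + runEffect N L' p γ := by
  simp [runEffect]

lemma perm_pow_mem_iff {E : Finset ℕ} {g : Equiv.Perm ℕ} (hg : g.IsCycleOn (E : Set ℕ))
    (k : ℕ) (v : ℕ) : (g ^ k) v ∈ E ↔ v ∈ E := by
  induction k with
  | zero => simp
  | succ k ih =>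
    rw [pow_succ', Equiv.Perm.mul_apply, ← ih]
    exact hg.apply_mem_iff

lemma perm_pow_apply_of_notMem {E : Finset ℕ} {g : Equiv.Perm ℕ}
    (hgE : ∀ v ∉ E, g v = v) (k : ℕ) {v : ℕ} (hv : v ∉ E) : (g ^ k) v = v := by
  induction k with
  | zero => simp
  | succ k ih => rw [pow_succ', Equiv.Perm.mul_apply, ih, hgE v hv]

lemma sum_ite_perm_pow {E : Finset ℕ} {g : Equiv.Perm ℕ} (hg : g.IsCycleOn (E : Set ℕ))
    {v γ : ℕ} (hv : v ∈ E) (hγ : γ ∈ E) (w : ℚ) :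
    (∑ k ∈ Finset.range E.card, if (g ^ k) v = γ then w else 0) = w := by
  obtain ⟨k, hk, hkv⟩ := hg.exists_pow_eq hv hγ
  rw [Finset.sum_eq_single k]
  · rw [if_pos hkv]
  · intro l hl hlk
    refine if_neg fun hlv => hlk ?_
    rw [← hkv, hg.pow_apply_eq_pow_apply hv] at hlv
    exact Nat.ModEq.eq_of_lt_of_lt hlv (Finset.mem_range.1 hl) hk
  · intro h
    exact absurd (Finset.mem_range.2 hk) h

/-- Spreading a step realises the collapse of its consumption and of its effect. -/
lemma sum_spreadStep {E : Finset ℕ} {g : Equiv.Perm ℕ} (hg : g.IsCycleOn (E : Set ℕ))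
    (hgE : ∀ v ∉ E, g v = v) {α β : ℕ} (hα : α ∉ E) (hβ : β ∈ E) (s : Step T V)
    {A : T → P → V → ℚ} (hA : ∀ p x, A s.t p x ≠ 0 → s.π x ≠ β) (p : P) (γ : ℕ) :
    ((spreadStep E g α β s).map fun s' => s'.c * compInv (A s'.t) s'.π p γ).sum =
      collapseCols E α (fun p γ => s.c * compInv (A s.t) s.π p γ) p γ := by
  have hn : (E.card : ℚ) ≠ 0 := by
    simpa using Finset.ne_empty_of_mem hβ
  have hlhs : ((spreadStep E g α β s).map fun s' => s'.c * compInv (A s'.t) s'.π p γ).sum =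
      s.c / (E.card : ℚ) * ∑ x : V, ∑ k ∈ Finset.range E.card,
        if (g ^ k) (Equiv.swap α β (s.π x)) = γ then A s.t p x else 0 := by
    rw [Finset.sum_comm, Finset.mul_sum]
    simp only [spreadStep, List.map_map, Function.comp_def, compInv]
    rw [← List.sum_toFinset _ List.nodup_range, List.toFinset_range]
  rw [hlhs]
  unfold collapseCols
  split_ifs with hγα hγE
  · rw [Finset.sum_eq_zero, mul_zero]
    refine fun x _ => Finset.sum_eq_zero fun k _ => ?_
    by_cases h0 : A s.t p x = 0
    · simp [h0]
    · refine if_neg fun hk => hA p x h0 ?_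
      have hk' := (g ^ k).injective
        (hk.trans (hγα.trans (perm_pow_apply_of_notMem hgE k hα).symm))
      rwa [Equiv.swap_apply_eq_iff, Equiv.swap_apply_left] at hk'
  · rw [← Finset.mul_sum, mul_div_right_comm]
    congr 1
    unfold compInv
    rw [Finset.sum_comm (s := insert α E)]
    refine Finset.sum_congr rfl fun x _ => ?_
    rw [Finset.sum_ite_eq]
    by_cases h0 : A s.t p x = 0
    · simp [h0]
    have hxβ := hA p x h0
    by_cases hx : s.π x ∈ insert α E
    · rw [if_pos hx]
      refine sum_ite_perm_pow hg ?_ hγE _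
      rcases Finset.mem_insert.1 hx with h | h
      · rwa [h, Equiv.swap_apply_left]
      · rwa [Equiv.swap_apply_of_ne_of_ne (ne_of_mem_of_not_mem h hα) hxβ]
    · rw [if_neg hx]
      rw [Finset.mem_insert, not_or] at hx
      refine Finset.sum_eq_zero fun k _ => if_neg fun hk => hx.2 ?_
      rw [Equiv.swap_apply_of_ne_of_ne hx.1 hxβ] at hk
      rwa [← perm_pow_mem_iff hg k, hk]
  · rw [div_mul_eq_mul_div, mul_div_assoc]
    congr 1
    unfold compInv
    rw [Finset.sum_div]
    refine Finset.sum_congr rfl fun x _ => ?_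
    have hk : ∀ k, (g ^ k) (Equiv.swap α β (s.π x)) = γ ↔ s.π x = γ := by
      intro k
      rw [← perm_pow_apply_of_notMem hgE k hγE, (g ^ k).injective.eq_iff,
        perm_pow_apply_of_notMem hgE k hγE, Equiv.swap_apply_eq_iff,
        Equiv.swap_apply_of_ne_of_ne hγα (fun h => hγE (h ▸ hβ))]
    simp only [hk, Finset.sum_const, Finset.card_range, nsmul_eq_mul]
    field_simp

lemma isRun_spreadStep (E : Finset ℕ) (g : Equiv.Perm ℕ) (α β : ℕ) {s : Step T V}
    (hs : IsStep s) : IsRun (spreadStep E g α β s) := by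
  intro s' hs'
  obtain ⟨k, -, rfl⟩ := List.mem_map.1 hs'
  exact ⟨div_nonneg hs.1 (Nat.cast_nonneg _),
    (g ^ k).injective.comp ((Equiv.swap α β).injective.comp hs.2)⟩

lemma runDval_spreadStep_subset (N : UDPN P T V) {E : Finset ℕ} {g : Equiv.Perm ℕ}
    (hg : g.IsCycleOn (E : Set ℕ)) (hgE : ∀ v ∉ E, g v = v) {α β : ℕ} (hα : α ∉ E)
    (hβ : β ∈ E) {s : Step T V} (hsβ : ∀ x ∈ varsOf N s.t, s.π x ≠ β) {S : Set ℕ}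
    (hES : (E : Set ℕ) ⊆ S) (hS : ∀ x ∈ varsOf N s.t, s.π x ∈ S) :
    runDval N (spreadStep E g α β s) ⊆ S \ {α} := by
  rintro γ ⟨s', hs', x, hx, rfl⟩
  obtain ⟨k, -, rfl⟩ := List.mem_map.1 hs'
  have hmem : ∀ v ∈ E, (g ^ k) v ∈ S \ {α} := fun v hv =>
    have h := (perm_pow_mem_iff hg k v).2 hv
    ⟨hES h, fun h' => hα (h' ▸ h)⟩
  change (g ^ k) (Equiv.swap α β (s.π x)) ∈ S \ {α}
  by_cases hxα : s.π x = α
  · rw [hxα, Equiv.swap_apply_left]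
    exact hmem β hβ
  · rw [Equiv.swap_apply_of_ne_of_ne hxα (hsβ x hx)]
    by_cases hxE : s.π x ∈ E
    · exact hmem _ hxE
    · rw [perm_pow_apply_of_notMem hgE k hxE]
      exact ⟨hS x hx, hxα⟩

/-- A run on data in `S` can be simulated, on collapsed markings, by one avoiding `α`. -/
lemma exists_collapsed_run (N : UDPN P T V) {E : Finset ℕ} {α : ℕ} (hα : α ∉ E) {S : Set ℕ}
    (hES : (E : Set ℕ) ⊆ S) (hcard : maxvars N < E.card) :
    ∀ (σ : List (Step T V)) (m : P → ℕ → ℚ), FinCols m → IsRun σ → runDval N σ ⊆ S →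
      runFireable true N m σ → ∃ ρ : List (Step T V), IsRun ρ ∧ runDval N ρ ⊆ S \ {α} ∧
        runFireable true N (collapseCols E α m) ρ ∧
        runEffect N ρ = collapseCols E α (runEffect N σ)
  | [], m, _, _, _, _ => by
    refine ⟨[], by simp [IsRun], by simp [runDval], trivial, (collapseCols_eq_self ?_).symm⟩
    simp [runEffect]
  | s :: σ, m, hm, hσ, hS, hfire => by
    obtain ⟨g, hg, hgE⟩ := E.countable_toSet.exists_cycleOn
    replace hgE : ∀ v ∉ E, g v = v := fun v hv => by
      by_contra h
      exact hv (hgE h)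
    have hs : IsStep s := hσ s (by simp)
    have hSs : ∀ x ∈ varsOf N s.t, s.π x ∈ S := fun x hx => hS ⟨s, by simp, x, hx, rfl⟩
    obtain ⟨β, hβ, hsβ⟩ : ∃ β ∈ E, ∀ x ∈ varsOf N s.t, s.π x ≠ β := by
      by_contra! h
      have hsub : (E : Set ℕ) ⊆ s.π '' varsOf N s.t := fun β hβ => h β hβ
      have h₁ := Set.ncard_le_ncard hsub ((Set.toFinite _).image _)
      have h₂ : (s.π '' varsOf N s.t).ncard ≤ (varsOf N s.t).ncard :=
        Set.ncard_image_le (Set.toFinite _)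
      have h₃ : (varsOf N s.t).ncard ≤ maxvars N :=
        Finset.le_sup (f := fun t : T => (varsOf N t).ncard) (Finset.mem_univ s.t)
      rw [Set.ncard_coe_finset] at h₁
      omega
    have hvars : ∀ p x, N.pre p s.t x ≠ 0 ∨ N.post s.t p x ≠ 0 → s.π x ≠ β :=
      fun p x h => hsβ x ⟨p, h⟩
    have hpre : ∀ p γ, ((spreadStep E g α β s).map fun s' =>
        s'.c * compInv (preMat N s'.t) s'.π p γ).sum =
        collapseCols E α (fun p γ => s.c * compInv (preMat N s.t) s.π p γ) p γ :=
      sum_spreadStep hg hgE hα hβ s fun p x h => hvars p x (Or.inl fun h0 => h (by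
        simp [preMat, h0]))
    have heff : runEffect N (spreadStep E g α β s) = collapseCols E α (stepEffect N s) := by
      funext p γ
      refine sum_spreadStep hg hgE hα hβ s (fun p x h => hvars p x ?_) p γ
      by_contra! h0
      exact h (by simp [delta, h0])
    obtain ⟨ρ, hρ, hρS, hρf, hρe⟩ := exists_collapsed_run N hα hES hcard σ _
      (hm.add (finCols_stepEffect N s)) (fun s' hs' => hσ s' (List.mem_cons_of_mem _ hs'))
      (fun γ ⟨s', hs', h⟩ => hS ⟨s', List.mem_cons_of_mem _ hs', h⟩) hfire.2
    refine ⟨spreadStep E g α β s ++ ρ, ?_, ?_, runFireable_append N _ _ _ ?_ ?_, ?_⟩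
    · intro s' hs'
      rcases List.mem_append.1 hs' with h | h
      exacts [isRun_spreadStep E g α β hs s' h, hρ s' h]
    · rintro γ ⟨s', hs', h⟩
      rcases List.mem_append.1 hs' with h' | h'
      · exact runDval_spreadStep_subset N hg hgE hα hβ hsβ hES hSs ⟨s', h', h⟩
      · exact hρS ⟨s', h', h⟩
    · refine runFireable_of_total_pre_le N _ _ (hm.collapseCols E α)
        (isRun_spreadStep E g α β hs) fun p γ => ?_
      have h0 := collapseCols_nonneg E α (hfire.1.2 rfl) p γ
      have hadd := congrFun (congrFun (collapseCols_add E α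
        (fun p γ => m p γ - s.c * compInv (preMat N s.t) s.π p γ)
        (fun p γ => s.c * compInv (preMat N s.t) s.π p γ)) p) γ
      simp only [sub_add_cancel] at hadd
      rw [hpre]
      linarith
    · rw [heff, ← collapseCols_add]
      exact hρf
    · have hcons : runEffect N (s :: σ) =
          fun p γ => stepEffect N s p γ + runEffect N σ p γ := by
        funext p γ
        simp [runEffect]
      rw [hcons, collapseCols_add, ← heff, ← hρe]
      funext p γ
      exact runEffect_append N _ _ p γ

lemma runDval_finite (N : UDPN P T V) (σ : List (Step T V)) : (runDval N σ).Finite := by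
  refine (σ.finite_toSet.biUnion fun s _ => (Set.finite_range s.π)).subset ?_
  rintro γ ⟨s, hs, x, -, rfl⟩
  exact Set.mem_biUnion hs ⟨x, rfl⟩

/-- If there is a ℚ⁺-run `σ` with `i →σ_{ℚ⁺} f` using more than
`|dval(i) ∪ dval(f)| + 1 + maxvars(N)` data values, then there is a ℚ⁺-run `ρ`
with `i →ρ_{ℚ⁺} f` and `|dval(ρ)| ≤ |dval(σ)| − 1`. -/
theorem qplus_reach_decrease
    (N : UDPN P T V) (i f : P → ℕ → ℚ)
    (hi : IsMarking true i) (hf : IsMarking true f)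
    (σ : List (Step T V)) (hσ : IsRun σ) (hσr : Reaches true N i σ f)
    (hbig : (dvalM i ∪ dvalM f).ncard + 1 + maxvars N < (runDval N σ).ncard) :
    ∃ ρ : List (Step T V), IsRun ρ ∧ Reaches true N i ρ f ∧
      (runDval N ρ).ncard ≤ (runDval N σ).ncard - 1 := by
  obtain ⟨hfire, hfeq⟩ := hσr
  have hSfin := runDval_finite N σ
  have hKfin : (dvalM i ∪ dvalM f).Finite := Set.Finite.union hi.1 hf.1
  have hdiff := Set.le_ncard_sdiff (dvalM i ∪ dvalM f) (runDval N σ) hKfin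
  have hDfin : (runDval N σ \ (dvalM i ∪ dvalM f)).Finite := hSfin.sdiff
  obtain ⟨α, hα⟩ : (runDval N σ \ (dvalM i ∪ dvalM f)).Nonempty :=
    (Set.ncard_pos hDfin).1 (by omega)
  set E : Finset ℕ := hDfin.toFinset.erase α with hE
  have hαE : α ∉ E := Finset.notMem_erase _ _
  have hmemE : ∀ e ∈ insert α E, e ∈ runDval N σ \ (dvalM i ∪ dvalM f) := by
    intro e he
    rw [hE, Finset.insert_erase (hDfin.mem_toFinset.2 hα)] at he
    exact hDfin.mem_toFinset.1 he
  have hES : (E : Set ℕ) ⊆ runDval N σ := fun e he =>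
    (hmemE e (Finset.mem_insert_of_mem he)).1
  have hcard : maxvars N < E.card := by
    rw [hE, Finset.card_erase_of_mem (hDfin.mem_toFinset.2 hα),
      ← Set.ncard_eq_toFinset_card _ hDfin]
    omega
  obtain ⟨ρ, hρ, hρS, hρf, hρe⟩ :=
    exists_collapsed_run N hαE hES hcard σ i hi.1 hσ subset_rfl hfire
  have hci : collapseCols E α i = i := collapseCols_eq_self fun e he p => by
    by_contra h
    exact (hmemE e he).2 (Or.inl ⟨p, h⟩)
  have hcf : collapseCols E α f = f := collapseCols_eq_self fun e he p => by
    by_contra h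
    exact (hmemE e he).2 (Or.inr ⟨p, h⟩)
  refine ⟨ρ, hρ, ⟨hci ▸ hρf, ?_⟩, ?_⟩
  · rw [hρe, ← hcf]
    conv_lhs => rw [hfeq, collapseCols_add, hci]
  · rw [← Set.ncard_sdiff_singleton_of_mem hα.1]
    exact Set.ncard_le_ncard hρS hSfin.sdiff
end
end

section
/- Let N = (P,T,F,Var) be a UDPN, X ∈ {ℚ, ℚ⁺}, and σ = σ_1⋯σ_l an X-run with intermediate markings i = m_0 →σ_1 m_1 →σ_2 ⋯ →σ_l m_l = f, such that |dval(σ)| > |dval(i) ∪ dval(f)| + 1 + maxvars(N). Let α ∈ dval(σ) \ (dval(i) ∪ dval(f)), E = dval(σ) \ (dval(i) ∪ dval(f) ∪ {α}), and let m_0' = i, m_1', …, m_l' be the ℚ-markings defined by m_{j+1}' = m_j' + Δ(U(E, R(α,E,σ_{j+1}))). Then for all 0 ≤ j ≤ l: (1) m_j'(•,α) = 0; (2) m_j'(•,γ) = m_j(•,γ) for every γ ∈ dval(i) ∪ dval(f); and (3) m_j'(•,γ) = (1/|E|)·Σ_{δ ∈ E∪{α}} m_j(•,δ) for every γ ∈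 E. -/
open Finset

noncomputable section
open scoped Classical

variable {P T V : Type} [Fintype P] [Fintype T] [Fintype V]

/-- The rank of `β` in `E`: the number of elements of `E` below `β`. -/
def rankE (E : Finset ℕ) (β : ℕ) : ℕ := (E.filter fun γ => γ < β).card

theorem prevE_mem {E : Finset ℕ} {β : ℕ} (hβ : β ∈ E) : prevE E β ∈ E := by
  unfold prevE
  split_ifs with h h'
  · exact (Finset.mem_filter.1 (Finset.max'_mem _ h)).1
  · exact Finset.max'_mem _ h'
  · exact absurd ⟨β, hβ⟩ h'

theorem rankE_prevE {E : Finset ℕ} {β : ℕ} (hβ : β ∈ E) :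
    (rankE E (prevE E β) : ZMod E.card) = rankE E β - 1 := by
  unfold prevE
  split_ifs with h h'
  · have hm := Finset.mem_filter.1 (Finset.max'_mem _ h)
    have hle : ∀ γ ∈ E.filter fun γ => γ < β, γ ≤ (E.filter fun γ => γ < β).max' h :=
      fun γ hγ => Finset.le_max' _ γ hγ
    generalize (E.filter fun γ => γ < β).max' h = m at hm hle ⊢
    have hins : (E.filter fun γ => γ < β) = insert m (E.filter fun γ => γ < m) := by
      ext γ
      simp only [Finset.mem_filter, Finset.mem_insert] at hle ⊢
      constructor
      · intro hγ
        rcases (hle γ hγ).eq_or_lt with h1 | h1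
        · exact Or.inl h1
        · exact Or.inr ⟨hγ.1, h1⟩
      · rintro (rfl | hγ)
        · exact hm
        · exact ⟨hγ.1, hγ.2.trans hm.2⟩
    simp [rankE, hins]
  · have hm := Finset.max'_mem _ h'
    have hle : ∀ γ ∈ E, γ ≤ E.max' h' := fun γ hγ => Finset.le_max' _ γ hγ
    generalize E.max' h' = m at hm hle ⊢
    have hins : E = insert m (E.filter fun γ => γ < m) := by
      ext γ
      simp only [Finset.mem_filter, Finset.mem_insert]
      constructor
      · intro hγ
        rcases (hle γ hγ).eq_or_lt with h1 | h1
        · exact Or.inl h1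
        · exact Or.inr ⟨hγ, h1⟩
      · rintro (rfl | hγ)
        · exact hm
        · exact hγ.1
    have hcard : E.card = rankE E m + 1 := by
      conv_lhs => rw [hins]
      simp [rankE]
    have hzero : rankE E β = 0 := by
      simpa [rankE, Finset.not_nonempty_iff_eq_empty] using h
    have hcast : ((rankE E m + 1 : ℕ) : ZMod E.card) = 0 := by
      rw [← hcard, ZMod.natCast_self]
    rw [hzero, eq_sub_iff_add_eq]
    exact_mod_cast hcast
  · exact absurd ⟨β, hβ⟩ h'

theorem iterate_prevE_mem {E : Finset ℕ} {β : ℕ} (hβ : β ∈ E) (k : ℕ) :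
    (prevE E)^[k] β ∈ E := by
  induction k with
  | zero => exact hβ
  | succ k ih => rw [Function.iterate_succ_apply']; exact prevE_mem ih

theorem rankE_iterate_prevE {E : Finset ℕ} {β : ℕ} (hβ : β ∈ E) (k : ℕ) :
    (rankE E ((prevE E)^[k] β) : ZMod E.card) = rankE E β - k := by
  induction k with
  | zero => simp
  | succ k ih =>
    rw [Function.iterate_succ_apply', rankE_prevE (iterate_prevE_mem hβ k), ih]
    push_cast
    ring

/-- The orbit of any element of `E` under `prevE E` runs through `E` exactly once in `|E|` steps. -/
theorem image_iterate_prevE {E : Finset ℕ} {β : ℕ} (hβ : β ∈ E) :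
    Set.InjOn (fun k => (prevE E)^[k] β) (Finset.range E.card) ∧
      (Finset.range E.card).image (fun k => (prevE E)^[k] β) = E := by
  have hinj : Set.InjOn (fun k => (prevE E)^[k] β) (Finset.range E.card) := by
    intro k hk l hl hkl
    have hcast : (k : ZMod E.card) = l := by
      have := congrArg (fun γ => (rankE E γ : ZMod E.card)) hkl
      simpa [rankE_iterate_prevE hβ] using this
    rw [ZMod.natCast_eq_natCast_iff] at hcast
    exact hcast.eq_of_lt_of_lt (by simpa using hk) (by simpa using hl)
  refine ⟨hinj, Finset.eq_of_subset_of_card_le ?_ ?_⟩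
  · intro γ hγ
    obtain ⟨k, -, rfl⟩ := Finset.mem_image.1 hγ
    exact iterate_prevE_mem hβ k
  · rw [Finset.card_image_of_injOn hinj, Finset.card_range]

theorem sum_iterate_prevE {E : Finset ℕ} {β : ℕ} (hβ : β ∈ E) (g : ℕ → ℚ) :
    ∑ k ∈ Finset.range E.card, g ((prevE E)^[k] β) = ∑ δ ∈ E, g δ := by
  obtain ⟨hinj, himage⟩ := image_iterate_prevE hβ
  conv_rhs => rw [← himage]
  rw [Finset.sum_image hinj]

theorem rotStep_iterate (E : Finset ℕ) (s : Step T V) (k : ℕ) :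
    (rotStep E)^[k] s =
      ⟨s.c, s.t, fun x => if s.π x ∈ E then (prevE E)^[k] (s.π x) else s.π x⟩ := by
  induction k with
  | zero => simp
  | succ k ih =>
    rw [Function.iterate_succ_apply', ih, rotStep]
    congr 1
    funext x
    by_cases hx : s.π x ∈ E
    · simp [rotMode, hx, iterate_prevE_mem hx, Function.iterate_succ_apply', -Function.iterate_succ]
    · simp [rotMode, hx]

theorem runEffect_uniformize (N : UDPN P T V) (E : Finset ℕ) (s : Step T V) (p : P) (γ : ℕ) :
    runEffect N (uniformize E s) p γ = s.c / E.card * ∑ x : V, ∑ k ∈ Finset.range E.card,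
      if (if s.π x ∈ E then (prevE E)^[k] (s.π x) else s.π x) = γ
        then delta N s.t p x else 0 := by
  rw [Finset.sum_comm, Finset.mul_sum]
  simp only [runEffect, uniformize, List.map_map, Finset.sum_range, Function.comp_def,
    rotStep_iterate, stepEffect, compInv]
  rw [← List.sum_ofFn, List.ofFn_eq_map, ← List.map_coe_finRange_eq_range, List.map_map]
  rfl

theorem runEffect_uniformize_of_notMem (N : UDPN P T V) {E : Finset ℕ} (hE : E.Nonempty)
    (s : Step T V) (p : P) {γ : ℕ} (hγ : γ ∉ E) :
    runEffect N (uniformize E s) p γ = stepEffect N s p γ := by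
  have hcard : (E.card : ℚ) ≠ 0 := by exact_mod_cast hE.card_ne_zero
  have hx : ∀ x : V, (∑ k ∈ Finset.range E.card,
      if (if s.π x ∈ E then (prevE E)^[k] (s.π x) else s.π x) = γ
        then delta N s.t p x else 0) =
      E.card * if s.π x = γ then delta N s.t p x else 0 := by
    intro x
    by_cases hx : s.π x ∈ E
    · have hne : s.π x ≠ γ := fun h => hγ (h ▸ hx)
      have hne' : ∀ k, (prevE E)^[k] (s.π x) ≠ γ := fun k h => hγ (h ▸ iterate_prevE_mem hx k)
      simp [hx, hne, hne']
    · simp [hx]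
  rw [runEffect_uniformize, Finset.sum_congr rfl fun x _ => hx x, ← Finset.mul_sum, stepEffect,
    compInv, ← mul_assoc, div_mul_cancel₀ _ hcard]

theorem runEffect_uniformize_of_mem (N : UDPN P T V) {E : Finset ℕ}
    (s : Step T V) (p : P) {γ : ℕ} (hγ : γ ∈ E) :
    runEffect N (uniformize E s) p γ = (∑ δ ∈ E, stepEffect N s p δ) / E.card := by
  have hx : ∀ x : V, (∑ k ∈ Finset.range E.card,
      if (if s.π x ∈ E then (prevE E)^[k] (s.π x) else s.π x) = γ
        then delta N s.t p x else 0) =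
      ∑ δ ∈ E, if s.π x = δ then delta N s.t p x else 0 := by
    intro x
    by_cases hx : s.π x ∈ E
    · simp only [hx, if_true]
      rw [sum_iterate_prevE hx (fun δ => if δ = γ then delta N s.t p x else 0)]
      simp [hx, hγ]
    · have hne : s.π x ≠ γ := fun h => hx (h ▸ hγ)
      simp [hx, hne]
  rw [runEffect_uniformize, Finset.sum_congr rfl fun x _ => hx x, Finset.sum_comm]
  simp only [stepEffect, compInv, ← Finset.mul_sum]
  ring

theorem swapVal_eq_swap (α β γ : ℕ) : swapVal α β γ = Equiv.swap α β γ := by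
  simp [swapVal, Equiv.swap_apply_def]

theorem compInv_swapVal (A : P → V → ℚ) (π : V → ℕ) (α β : ℕ) (p : P) (γ : ℕ) :
    compInv A (fun x => swapVal α β (π x)) p γ = compInv A π p (Equiv.swap α β γ) := by
  simp only [compInv, swapVal_eq_swap, Equiv.swap_apply_eq_iff]

theorem exists_mem_zeroCol (N : UDPN P T V) (s : Step T V) {E : Finset ℕ}
    (hE : maxvars N < E.card) : (E.filter fun β => zeroCol N s β).Nonempty := by
  by_contra hempty
  have hsub : E ⊆ (varsOf N s.t).toFinset.image s.π := by
    intro β hβ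
    by_contra hmem
    refine hempty ⟨β, Finset.mem_filter.2 ⟨hβ, fun p => Finset.sum_eq_zero fun x _ => ?_⟩⟩
    split_ifs with hx
    · have hvar : x ∉ varsOf N s.t := fun h =>
        hmem (Finset.mem_image.2 ⟨x, Set.mem_toFinset.2 h, hx⟩)
      simp only [varsOf, Set.mem_ofPred_eq, not_exists, not_or, not_not] at hvar
      simp [delta, hvar p]
    · rfl
  have hcard := (Finset.card_le_card hsub).trans Finset.card_image_le
  rw [← Set.ncard_eq_toFinset_card'] at hcard
  have hmax : (varsOf N s.t).ncard ≤ maxvars N :=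
    Finset.le_sup (f := fun t => (varsOf N t).ncard) (Finset.mem_univ s.t)
  omega

/-- A step is changed by `replaceStep` only in columns `α` and some `β ∈ E`, which are exchanged;
afterwards column `α` is zero. -/
theorem exists_swap_replaceStep (N : UDPN P T V) (s : Step T V) {E : Finset ℕ}
    (hE : maxvars N < E.card) (α : ℕ) :
    ∃ β ∈ insert α E,
      (∀ p γ, stepEffect N (replaceStep N α E s) p γ = stepEffect N s p (Equiv.swap α β γ)) ∧
      ∀ p, stepEffect N s p β = 0 := by
  by_cases h0 : zeroCol N s α
  · exact ⟨α, Finset.mem_insert_self _ _, by simp [replaceStep, h0],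
      fun p => by rw [stepEffect, h0 p, mul_zero]⟩
  · have h := exists_mem_zeroCol N s hE
    have hmem := Finset.mem_filter.1 (Finset.min'_mem _ h)
    refine ⟨_, Finset.mem_insert_of_mem hmem.1, fun p γ => ?_,
      fun p => by rw [stepEffect, hmem.2 p, mul_zero]⟩
    simp only [replaceStep, h0, h, if_false, dif_pos, stepEffect, compInv_swapVal]

theorem stepEffect_replaceStep_self (N : UDPN P T V) (s : Step T V) {E : Finset ℕ}
    (hE : maxvars N < E.card) (α : ℕ) (p : P) :
    stepEffect N (replaceStep N α E s) p α = 0 := by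
  obtain ⟨β, -, hswap, hzero⟩ := exists_swap_replaceStep N s hE α
  rw [hswap, Equiv.swap_apply_left, hzero]

theorem stepEffect_replaceStep_of_notMem (N : UDPN P T V) (s : Step T V) {E : Finset ℕ}
    (hE : maxvars N < E.card) (α : ℕ) (p : P) {γ : ℕ} (hγ : γ ∉ insert α E) :
    stepEffect N (replaceStep N α E s) p γ = stepEffect N s p γ := by
  obtain ⟨β, hβ, hswap, -⟩ := exists_swap_replaceStep N s hE α
  rw [hswap, Equiv.swap_apply_of_ne_of_ne]
  · exact fun h => hγ (h ▸ Finset.mem_insert_self _ _)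
  · exact fun h => hγ (h ▸ hβ)

theorem sum_stepEffect_replaceStep (N : UDPN P T V) (s : Step T V) {E : Finset ℕ}
    (hE : maxvars N < E.card) {α : ℕ} (hα : α ∉ E) (p : P) :
    ∑ δ ∈ E, stepEffect N (replaceStep N α E s) p δ =
      ∑ δ ∈ insert α E, stepEffect N s p δ := by
  rw [← zero_add (∑ δ ∈ E, _), ← stepEffect_replaceStep_self N s hE α p,
    ← Finset.sum_insert hα]
  obtain ⟨β, hβ, hswap, -⟩ := exists_swap_replaceStep N s hE α
  simp only [hswap]
  refine Finset.sum_equiv (Equiv.swap α β) (fun δ => ?_) fun _ _ => rfl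
  have hα' := Finset.mem_insert_self α E
  rw [Equiv.swap_apply_def]
  split_ifs with h1 h2
  · exact iff_of_true (h1 ▸ hα') hβ
  · exact iff_of_true (h2 ▸ hβ) hα'
  · exact Iff.rfl

theorem runEffect_cons (N : UDPN P T V) (s : Step T V) (ρ : List (Step T V)) (p : P) (γ : ℕ) :
    runEffect N (s :: ρ) p γ = stepEffect N s p γ + runEffect N ρ p γ := by
  simp [runEffect]

theorem runEffect_decRun_cons (N : UDPN P T V) (α : ℕ) (E : Finset ℕ) (s : Step T V)
    (ρ : List (Step T V)) (p : P) (γ : ℕ) :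
    runEffect N (decRun N α E (s :: ρ)) p γ =
      runEffect N (uniformize E (replaceStep N α E s)) p γ +
        runEffect N (decRun N α E ρ) p γ := by
  simp [runEffect, decRun]

/-- The effect of `dec(E,α,ρ)` on the column `α`, on the columns outside `E ∪ {α}` and on the
columns in `E`. -/
theorem runEffect_decRun (N : UDPN P T V) {E : Finset ℕ} (hE : maxvars N < E.card) {α : ℕ}
    (hα : α ∉ E) (ρ : List (Step T V)) (p : P) :
    runEffect N (decRun N α E ρ) p α = 0 ∧
    (∀ γ ∉ insert α E, runEffect N (decRun N α E ρ) p γ = runEffect N ρ p γ) ∧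
    ∀ γ ∈ E, runEffect N (decRun N α E ρ) p γ =
      (∑ δ ∈ insert α E, runEffect N ρ p δ) / E.card := by
  have hne : E.Nonempty := Finset.card_pos.1 (by omega)
  induction ρ with
  | nil => simp [runEffect, decRun]
  | cons s ρ ih =>
    obtain ⟨ihα, ihout, ihE⟩ := ih
    simp only [runEffect_decRun_cons, runEffect_cons]
    refine ⟨?_, fun γ hγ => ?_, fun γ hγ => ?_⟩
    · rw [runEffect_uniformize_of_notMem N hne _ p hα, stepEffect_replaceStep_self N s hE, ihα,
        add_zero]
    · rw [runEffect_uniformize_of_notMem N hne _ p fun h => hγ (Finset.mem_insert_of_mem h),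
        stepEffect_replaceStep_of_notMem N s hE α p hγ, ihout γ hγ]
    · rw [runEffect_uniformize_of_mem N _ p hγ, sum_stepEffect_replaceStep N s hE hα, ihE γ hγ,
        Finset.sum_add_distrib, add_div]

/-- The three invariants of the intermediate markings of the
decrease transformation, where `m_j = i + Δ(σ(1)⋯σ(j))` and
`m_j' = i + Δ(dec(E,α,σ(1)⋯σ(j)))` (`pos = true` corresponds to `X = ℚ⁺`,
`pos = false` to `X = ℚ`). -/
theorem dec_run_intermediate (pos : Bool)
    (N : UDPN P T V) (i f : P → ℕ → ℚ)
    (hi : IsMarking pos i) (hf : IsMarking pos f)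
    (σ : List (Step T V)) (hσ : IsRun σ) (hσr : Reaches pos N i σ f)
    (hbig : (dvalM i ∪ dvalM f).ncard + 1 + maxvars N < (runDval N σ).ncard)
    (α : ℕ) (hα : α ∈ runDval N σ \ (dvalM i ∪ dvalM f))
    (E : Finset ℕ)
    (hE : (↑E : Set ℕ) = runDval N σ \ (dvalM i ∪ dvalM f ∪ {α})) :
    ∀ j ≤ σ.length,
      (∀ p : P, i p α + runEffect N (decRun N α E (σ.take j)) p α = 0) ∧
      (∀ γ ∈ dvalM i ∪ dvalM f, ∀ p : P,
        i p γ + runEffect N (decRun N α E (σ.take j)) p γ =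
          i p γ + runEffect N (σ.take j) p γ) ∧
      (∀ γ ∈ E, ∀ p : P,
        i p γ + runEffect N (decRun N α E (σ.take j)) p γ =
          (∑ δ ∈ insert α E, (i p δ + runEffect N (σ.take j) p δ)) / (E.card : ℚ)) := by
  have hαE : α ∉ E := fun h => by
    have : α ∈ (↑E : Set ℕ) := h
    rw [hE] at this
    exact this.2 (Or.inr rfl)
  have hdisj : ∀ γ ∈ E, γ ∉ dvalM i ∪ dvalM f := fun γ h hγ => by
    have : γ ∈ (↑E : Set ℕ) := h
    rw [hE] at this
    exact this.2 (Or.inl hγ)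
  have hcard : maxvars N < E.card := by
    have hfin : (dvalM i ∪ dvalM f).Finite := hi.1.union hf.1
    have hdiff := Set.ncard_le_ncard_sdiff_add_ncard (runDval N σ) (dvalM i ∪ dvalM f ∪ {α})
      (hfin.union (Set.finite_singleton α))
    have hunion := Set.ncard_union_le (dvalM i ∪ dvalM f) {α}
    rw [← hE, Set.ncard_coe_finset] at hdiff
    rw [Set.ncard_singleton] at hunion
    omega
  have hzero : ∀ γ ∉ dvalM i ∪ dvalM f, ∀ p, i p γ = 0 := fun γ hγ p => by
    by_contra h
    exact hγ (Or.inl ⟨p, h⟩)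
  intro j _
  refine ⟨fun p => ?_, fun γ hγ p => ?_, fun γ hγ p => ?_⟩
  · rw [hzero α hα.2, (runEffect_decRun N hcard hαE _ p).1, add_zero]
  · rw [(runEffect_decRun N hcard hαE _ p).2.1 γ]
    rw [Finset.mem_insert]
    rintro (rfl | h)
    · exact hα.2 hγ
    · exact hdisj γ h hγ
  · rw [hzero γ (hdisj γ hγ), (runEffect_decRun N hcard hαE _ p).2.2 γ hγ, zero_add]
    congr 1
    refine Finset.sum_congr rfl fun δ hδ => ?_
    rw [hzero δ, zero_add]
    rcases Finset.mem_insert.1 hδ with rfl | h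
    · exact hα.2
    · exact hdisj δ h
end
end
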